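/- arXiv:2003.07061 — 2 statements merged into one kernel-verified Lean document; each statement's English description precedes it below -/
import Mathlib

section
/- For every positive integer t and every ε ∈ (0, 1/2], every finite hypergraph on at least t·⌈1/ε⌉ vertices with VC-dimension 1 admits an ε-t-net of size at most t·⌈1/ε⌉ + 1. -/
/-- `A` is shattered by the hyperedge family `E`. -/
def Shatters {V : Type*} [DecidableEq V] (E : Finset (Finset V)) (A : Finset V) : Prop :=
  ∀ B ⊆ A, ∃ e ∈ E, A ∩ e = B

/-- The hypergraph with hyperedge family `E` has VC-dimension exactly `d`. -/
def IsVCDim {V : Type*} [DecidableEq V] (E : Finset (Finset V)) (d : ℕ) : Prop :=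
  (∃ A : Finset V, Shatters E A ∧ A.card = d) ∧
  ∀ A : Finset V, Shatters E A → A.card ≤ d

/-- `S` is an `ε`-`t`-net for the hypergraph with vertex set `V` and hyperedges `E`. -/
def IsEpsTNet {V : Type*} [Fintype V] (E : Finset (Finset V)) (ε : ℝ) (t : ℕ)
    (S : Finset (Finset V)) : Prop :=
  (∀ s ∈ S, s.card = t) ∧
  ∀ e ∈ E, ε * (Fintype.card V : ℝ) ≤ (e.card : ℝ) → ∃ s ∈ S, s ⊆ e

/-!
Let `F` be the family of hyperedges with at least `k = ⌈ε * n⌉` vertices. It suffices to find a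
vertex set `W` of size at most `t * ⌈1 / ε⌉` that every `e ∈ F` meets in at least `t` vertices: by
Sauer-Shelah, `F` has at most `#W + 1` traces on `W`, and one `t`-subset of each trace is enough.

Since no pair of vertices is shattered, two vertices that lie in a common member of `F` and are
both avoided by another one are comparable for the preorder "every member of `F` containing `x`
contains `y`". Fix `e₀ ∈ F`. If two vertices of `e₀` together meet every member of `F`, put both
into `W` and recurse with `k - 1` and `t - 1`. Otherwise the preorder is a forest on `e₀` and on
its complement, and members of `F` trace root paths on both. Labelling the vertices of `e₀` by
their depths `0, 1, …` and the others by `-1, -2, …` makes every `e ∈ F` an interval of `#e`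
consecutive integers, which meets all residue classes modulo `k`; let `W` be the union of `t`
residue classes that are light on average.
-/

section

open Finset

variable {V : Type*} [DecidableEq V] {F : Finset (Finset V)} {A B G P S W : Finset V} {k t : ℕ}

lemma IsVCDim.vcDim_eq {E : Finset (Finset V)} {d : ℕ} (h : IsVCDim E d) : E.vcDim = d := by
  obtain ⟨⟨A, hA, rfl⟩, hmax⟩ := h
  refine le_antisymm (Finset.sup_le fun B hB ↦ hmax B fun C hC ↦ mem_shatterer.1 hB hC) ?_
  exact Finset.Shatters.card_le_vcDim fun C hC ↦ hA C hC

lemma subset_and_shatters_of_shatters_image_inter (h : (F.image (· ∩ W)).Shatters S) :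
    S ⊆ W ∧ F.Shatters S := by
  have hSW : S ⊆ W := by
    obtain ⟨_, hu, hSu⟩ := h.exists_superset
    obtain ⟨e, -, rfl⟩ := mem_image.1 hu
    exact hSu.trans inter_subset_right
  refine ⟨hSW, fun B hB ↦ ?_⟩
  obtain ⟨_, hu, rfl⟩ := h hB
  obtain ⟨e, he, rfl⟩ := mem_image.1 hu
  exact ⟨e, he, by rw [inter_comm e, ← inter_assoc, inter_eq_left.2 hSW]⟩

lemma card_image_inter_le_sum_vcDim (F : Finset (Finset V)) (W : Finset V) :
    #(F.image (· ∩ W)) ≤ ∑ i ∈ Iic F.vcDim, (#W).choose i := by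
  simp_rw [← card_powersetCard]
  refine (card_le_card_shatterer _).trans <|
    (card_le_card fun S hS ↦ mem_biUnion.2 ⟨#S, ?_⟩).trans card_biUnion_le
  obtain ⟨hSW, hS⟩ := subset_and_shatters_of_shatters_image_inter (mem_shatterer.1 hS)
  exact ⟨mem_Iic.2 hS.card_le_vcDim, mem_powersetCard.2 ⟨hSW, rfl⟩⟩

lemma card_image_inter_le_of_vcDim_le_one (hF : F.vcDim ≤ 1) (W : Finset V) :
    #(F.image (· ∩ W)) ≤ #W + 1 :=
  calc #(F.image (· ∩ W)) ≤ ∑ i ∈ Iic F.vcDim, (#W).choose i := card_image_inter_le_sum_vcDim F W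
    _ ≤ ∑ i ∈ Iic 1, (#W).choose i := sum_le_sum_of_subset (Iic_subset_Iic.2 hF)
    _ = #W + 1 := by simp [← Nat.range_succ_eq_Iic, sum_range_succ, add_comm]

lemma exists_card_eq_subset_of_le_card_inter (h : ∀ e ∈ F, t ≤ #(e ∩ W)) :
    ∃ S : Finset (Finset V), #S ≤ #(F.image (· ∩ W)) ∧ (∀ s ∈ S, #s = t) ∧
      ∀ e ∈ F, ∃ s ∈ S, s ⊆ e := by
  have htrace : ∀ w ∈ F.image (· ∩ W), ∃ s ⊆ w, #s = t :=
    forall_mem_image.2 fun e he ↦ exists_subset_card_eq (h e he)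
  choose! g hgsub hgcard using htrace
  refine ⟨(F.image (· ∩ W)).image g, card_image_le, forall_mem_image.2 hgcard, fun e he ↦ ?_⟩
  have hmem : e ∩ W ∈ F.image (· ∩ W) := mem_image_of_mem _ he
  exact ⟨g (e ∩ W), mem_image_of_mem g hmem, (hgsub _ hmem).trans inter_subset_left⟩

/-- `x` entails `y` in the family `F` when every member of `F` containing `x` contains `y`; this is
the preorder on vertices along which members of `F` are upward closed. -/
def Entails (F : Finset (Finset V)) (x y : V) : Prop :=
  ∀ e ∈ F, x ∈ e → y ∈ e

/-- The entailment preorder of `F` is a forest on `S`: the trace on `S` of every member of `F` is a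
chain, to be thought of as the path from a root down to some vertex. -/
def IsForest (F : Finset (Finset V)) (S : Finset V) : Prop :=
  ∀ e ∈ F, ∀ x ∈ e ∩ S, ∀ y ∈ e ∩ S, Entails F x y ∨ Entails F y x

lemma entails_or_entails_of_vcDim_le_one (hF : F.vcDim ≤ 1) {x y : V}
    (hmem : ∃ e ∈ F, x ∈ e ∧ y ∈ e) (hnot : ∃ e ∈ F, x ∉ e ∧ y ∉ e) :
    Entails F x y ∨ Entails F y x := by
  by_contra! ⟨hxy, hyx⟩
  simp only [Entails, not_forall] at hxy hyx
  obtain ⟨e₁, he₁, hx₁, hy₁⟩ := hxy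
  obtain ⟨e₂, he₂, hy₂, hx₂⟩ := hyx
  obtain ⟨e₃, he₃, hx₃, hy₃⟩ := hmem
  obtain ⟨e₄, he₄, hx₄, hy₄⟩ := hnot
  have hshatters : F.Shatters {x, y} := by
    intro B hB
    have hcases : B = ∅ ∨ B = {x} ∨ B = {y} ∨ B = {x, y} := by grind
    rcases hcases with rfl | rfl | rfl | rfl
    · exact ⟨e₄, he₄, by grind⟩
    · exact ⟨e₁, he₁, by grind⟩
    · exact ⟨e₂, he₂, by grind⟩
    · exact ⟨e₃, he₃, by grind⟩
  have hne : x ≠ y := fun h ↦ hy₁ (h ▸ hx₁)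
  exact absurd (hshatters.card_le_vcDim.trans hF) (by simp [card_pair hne])

lemma isForest_of_vcDim_le_one (hF : F.vcDim ≤ 1)
    (hS : ∀ x ∈ S, ∀ y ∈ S, x ≠ y → ∃ e ∈ F, x ∉ e ∧ y ∉ e) : IsForest F S := by
  intro e he x hx y hy
  rw [mem_inter] at hx hy
  obtain rfl | hxy := eq_or_ne x y
  · exact .inl fun _ _ ↦ id
  · exact entails_or_entails_of_vcDim_le_one hF ⟨e, he, hx.1, hy.1⟩ (hS x hx.2 y hy.2 hxy)

lemma Entails.symm_of_card_le {x y : V} (h : Entails F y x)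
    (hcard : #{e ∈ F | x ∈ e} ≤ #{e ∈ F | y ∈ e}) : Entails F x y := by
  have hsub : {e ∈ F | y ∈ e} ⊆ {e ∈ F | x ∈ e} := fun e he ↦ by
    rw [mem_filter] at he ⊢
    exact ⟨he.1, h e he.1 he.2⟩
  intro e he hx
  have : e ∈ ({e ∈ F | y ∈ e} : Finset _) :=
    eq_of_subset_of_card_le hsub hcard ▸ mem_filter.2 ⟨he, hx⟩
  exact (mem_filter.1 this).2

lemma IsForest.mono (h : IsForest F S) (hWS : W ⊆ S) : IsForest F W := fun e he x hx y hy ↦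
  h e he x (inter_subset_inter_left hWS hx) y (inter_subset_inter_left hWS hy)

lemma IsForest.exists_depth (hS : IsForest F S) :
    ∃ d : V → ℕ, ∀ e ∈ F, (e ∩ S).image d = range #(e ∩ S) := by
  classical
  -- A vertex `x` of least degree is deepest: every member of `F` through `x` has the same trace on
  -- the rest of `S`, so `x` can be placed just below that path.
  induction S using induction_on_min_value (fun x ↦ #{e ∈ F | x ∈ e}) with
  | empty => exact ⟨0, by simp⟩
  | insert x S hxS hmin ih =>
    obtain ⟨d, hd⟩ := ih (hS.mono (subset_insert x S))
    have hpath : ∀ e ∈ F, x ∈ e → e ∩ S = {z ∈ S | Entails F x z} := by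
      intro e he hxe
      ext z
      rw [mem_inter, mem_filter, and_comm]
      refine and_congr_right fun hzS ↦ ⟨fun hze ↦ ?_, fun hxz ↦ hxz e he hxe⟩
      exact (hS e he x (by simp [hxe]) z (by simp [hze, hzS])).elim id
        fun hzx ↦ hzx.symm_of_card_le (hmin z hzS)
    refine ⟨Function.update d x #{z ∈ S | Entails F x z}, fun e he ↦ ?_⟩
    have hupdate : (e ∩ S).image (Function.update d x #{z ∈ S | Entails F x z}) =
        range #(e ∩ S) := by
      rw [← hd e he]
      refine image_congr fun z hz ↦ Function.update_of_ne ?_ _ _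
      rintro rfl
      exact hxS (mem_of_mem_inter_right hz)
    by_cases hxe : x ∈ e
    · rw [inter_insert_of_mem hxe, image_insert, hupdate, Function.update_self,
        card_insert_of_notMem (fun h ↦ hxS (mem_of_mem_inter_right h)), ← hpath e he hxe,
        range_add_one]
    · rw [inter_insert_of_notMem hxe, hupdate]

lemma card_inter_union_of_disjoint (hAB : Disjoint A B) (e : Finset V) :
    #(e ∩ (A ∪ B)) = #(e ∩ A) + #(e ∩ B) := by
  rw [inter_union_distrib_left, card_union_of_disjoint]
  exact hAB.mono inter_subset_right inter_subset_right

lemma exists_image_inter_union_eq_Ico (hAB : Disjoint A B) (hA : IsForest F A)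
    (hB : IsForest F B) :
    ∃ φ : V → ℤ, ∀ e ∈ F, (e ∩ (A ∪ B)).image φ = Ico (-#(e ∩ B) : ℤ) #(e ∩ A) := by
  obtain ⟨dA, hdA⟩ := hA.exists_depth
  obtain ⟨dB, hdB⟩ := hB.exists_depth
  let φ : V → ℤ := fun v ↦ if v ∈ A then dA v else -1 - dB v
  refine ⟨φ, fun e he ↦ ?_⟩
  have himgA : (e ∩ A).image φ = Ico (0 : ℤ) #(e ∩ A) :=
    calc (e ∩ A).image φ = ((e ∩ A).image dA).image Nat.cast := by
          rw [image_image]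
          exact image_congr fun v hv ↦ if_pos (mem_of_mem_inter_right hv)
      _ = Ico (0 : ℤ) #(e ∩ A) := by
          ext i
          simp only [hdA e he, mem_image, mem_range, mem_Ico]
          exact ⟨by omega, fun hi ↦ ⟨i.toNat, by omega⟩⟩
  have himgB : (e ∩ B).image φ = Ico (-#(e ∩ B) : ℤ) 0 :=
    calc (e ∩ B).image φ = ((e ∩ B).image dB).image (fun n : ℕ ↦ -1 - (n : ℤ)) := by
          rw [image_image]
          exact image_congr fun v hv ↦
            if_neg (disjoint_right.1 hAB (mem_of_mem_inter_right hv))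
      _ = Ico (-#(e ∩ B) : ℤ) 0 := by
          ext i
          simp only [hdB e he, mem_image, mem_range, mem_Ico]
          exact ⟨by omega, fun hi ↦ ⟨(-1 - i).toNat, by omega⟩⟩
  rw [inter_union_distrib_left, image_union, himgA, himgB, union_comm,
    Ico_union_Ico_eq_Ico (by simp) (by simp)]

lemma min_le_card_image_intCast_Ico (k n : ℕ) (a : ℤ) :
    min n k ≤ #((Ico a (a + n)).image (Int.cast : ℤ → ZMod k)) := by
  have hinj : Set.InjOn (Int.cast : ℤ → ZMod k) (Ico a (a + min n k : ℤ)) := by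
    intro i hi j hj hij
    rw [coe_Ico, Set.mem_Ico] at hi hj
    rw [ZMod.intCast_eq_intCast_iff_dvd_sub] at hij
    have := Int.eq_zero_of_abs_lt_dvd hij (abs_lt.2 ⟨by omega, by omega⟩)
    omega
  calc min n k = #((Ico a (a + min n k : ℤ)).image (Int.cast : ℤ → ZMod k)) := by
        rw [card_image_of_injOn hinj, Int.card_Ico]; omega
    _ ≤ _ := card_le_card (image_subset_image (Ico_subset_Ico_right (by omega)))

/-- `W` is a `(k, t)`-thinning of `G` for the family `F`: a subset of `G` retaining at least `t - j`
vertices of every member of `F` that has at least `k - j` vertices in `G`. The displayed inequality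
says this for all `j` at once, without subtraction. -/
def IsThinning (F : Finset (Finset V)) (G : Finset V) (k t : ℕ) (W : Finset V) : Prop :=
  W ⊆ G ∧ ∀ e ∈ F, min #(e ∩ G) k + t ≤ #(e ∩ W) + k

lemma isThinning_zero_empty (F : Finset (Finset V)) (G : Finset V) (k : ℕ) :
    IsThinning F G k 0 ∅ :=
  ⟨empty_subset G, fun e _ ↦ by simp⟩

lemma IsThinning.union_of_sdiff (h : IsThinning F (G \ P) k t W) (hPG : P ⊆ G)
    (hP : ∀ e ∈ F, (e ∩ P).Nonempty) : IsThinning F G (k + 1) (t + 1) (W ∪ P) := by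
  refine ⟨union_subset (h.1.trans sdiff_subset) hPG, fun e he ↦ ?_⟩
  have hG := card_inter_union_of_disjoint (sdiff_disjoint (s := P) (t := G)) e
  rw [sdiff_union_of_subset hPG] at hG
  have hW := card_inter_union_of_disjoint (disjoint_of_subset_left h.1 sdiff_disjoint) e
  have hpos := card_pos.2 (hP e he)
  have hthin := h.2 e he
  omega

lemma exists_card_mul_card_filter_sub_mem_le {ι : Type*} [AddGroup ι] [Fintype ι] [DecidableEq ι]
    {α : Type*} (G : Finset α) (χ : α → ι) (T : Finset ι) :
    ∃ a, Fintype.card ι * #{v ∈ G | χ v - a ∈ T} ≤ #T * #G := by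
  have hcount : ∀ v, #{a | χ v - a ∈ T} = #T := fun v ↦
    card_equiv (Equiv.subLeft (χ v)) (by simp)
  have hsum : ∑ a, #{v ∈ G | χ v - a ∈ T} = #T * #G :=
    calc ∑ a, #{v ∈ G | χ v - a ∈ T} = ∑ v ∈ G, #{a | χ v - a ∈ T} :=
          sum_card_bipartiteAbove_eq_sum_card_bipartiteBelow fun a v ↦ χ v - a ∈ T
      _ = #T * #G := by simp [hcount, mul_comm]
  obtain ⟨a, -, ha⟩ := exists_le_of_sum_le (s := univ) (g := fun _ : ι ↦ #T * #G) univ_nonempty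
    (by simp [← mul_sum, hsum] : ∑ a, Fintype.card ι * #{v ∈ G | χ v - a ∈ T} ≤ _)
  exact ⟨a, ha⟩

lemma exists_isThinning_of_coloring {ι : Type*} [AddGroup ι] [Fintype ι] [DecidableEq ι]
    (χ : V → ι) (hχ : ∀ e ∈ F, min #(e ∩ G) (Fintype.card ι) ≤ #((e ∩ G).image χ))
    (T : Finset ι) :
    ∃ W, IsThinning F G (Fintype.card ι) #T W ∧ Fintype.card ι * #W ≤ #T * #G := by
  obtain ⟨a, ha⟩ := exists_card_mul_card_filter_sub_mem_le G χ T
  refine ⟨{v ∈ G | χ v - a ∈ T}, ⟨filter_subset _ _, fun e he ↦ ?_⟩, ha⟩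
  have hseen : #{c ∈ (e ∩ G).image χ | c - a ∈ T} ≤ #(e ∩ {v ∈ G | χ v - a ∈ T}) := by
    rw [filter_image, ← inter_filter]
    exact card_image_le
  have htranslate : #{c | c - a ∈ T} = #T := card_equiv (Equiv.subRight a) (by simp)
  have hmissed : #{c ∈ (e ∩ G).image χ | c - a ∉ T} + #T ≤ Fintype.card ι :=
    calc #{c ∈ (e ∩ G).image χ | c - a ∉ T} + #T ≤ #{c | c - a ∉ T} + #{c | c - a ∈ T} := by
          rw [htranslate]
          gcongr
          exact subset_univ _
      _ = Fintype.card ι := by rw [add_comm, card_filter_add_card_filter_not, card_univ]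
  have hsplit := card_filter_add_card_filter_not (s := (e ∩ G).image χ) (fun c ↦ c - a ∈ T)
  have hcolours := hχ e he
  omega

lemma exists_isThinning_union_of_isForest (hAB : Disjoint A B) (hA : IsForest F A)
    (hB : IsForest F B) (htk : t ≤ k) :
    ∃ W, IsThinning F (A ∪ B) k t W ∧ k * #W ≤ t * #(A ∪ B) := by
  obtain rfl | hk := Nat.eq_zero_or_pos k
  · obtain rfl : t = 0 := by omega
    exact ⟨∅, isThinning_zero_empty .., by simp⟩
  have : NeZero k := ⟨hk.ne'⟩
  obtain ⟨φ, hφ⟩ := exists_image_inter_union_eq_Ico hAB hA hB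
  obtain ⟨T, -, hT⟩ := exists_subset_card_eq
    (show t ≤ #(univ : Finset (ZMod k)) by rwa [card_univ, ZMod.card])
  have hχ : ∀ e ∈ F, min #(e ∩ (A ∪ B)) k ≤
      #((e ∩ (A ∪ B)).image fun v ↦ (φ v : ZMod k)) := by
    intro e he
    have himg : (e ∩ (A ∪ B)).image (fun v ↦ (φ v : ZMod k)) =
        (Ico (-#(e ∩ B) : ℤ) (-#(e ∩ B) + #(e ∩ (A ∪ B)))).image Int.cast := by
      rw [card_inter_union_of_disjoint hAB, Nat.cast_add, neg_add_eq_sub, add_sub_cancel_right,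
        ← hφ e he, image_image]
      rfl
    exact himg ▸ min_le_card_image_intCast_Ico k _ _
  simpa only [ZMod.card, hT] using exists_isThinning_of_coloring _ (by simpa only [ZMod.card]) T

lemma succ_mul_add_two_le {k t w M : ℕ} (ht : 0 < t) (htk : t ≤ k) (hM : 2 * k ≤ M)
    (hw : k * w ≤ t * M) : (k + 1) * (w + 2) ≤ (t + 1) * (M + 2) := by
  obtain ⟨p, rfl⟩ := Nat.exists_eq_add_of_le htk
  obtain ⟨q, rfl⟩ := Nat.exists_eq_add_of_le hM
  -- After multiplication by `k`, the slack left once `hw` is used is `(k - t) * (M - 2 * k)`.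
  refine Nat.le_of_mul_le_mul_left (c := t + p) ?_ (by omega)
  nlinarith [Nat.zero_le (p * q)]

lemma exists_isThinning_succ_of_pair {x y : V} (hx : x ∈ G) (hy : y ∈ G) (hxy : x ≠ y)
    (hcover : ∀ e ∈ F, x ∈ e ∨ y ∈ e) (htk : t ≤ k)
    (h : ∃ W, IsThinning F (G \ {x, y}) k t W ∧ k * #W ≤ t * max #(G \ {x, y}) (2 * k)) :
    ∃ W, IsThinning F G (k + 1) (t + 1) W ∧ (k + 1) * #W ≤ (t + 1) * max #G (2 * (k + 1)) := by
  have hsub : {x, y} ⊆ G := insert_subset hx (singleton_subset_iff.2 hy)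
  have hmeet : ∀ e ∈ F, (e ∩ {x, y}).Nonempty := fun e he ↦
    (hcover e he).elim (fun h ↦ ⟨x, by simp [h]⟩) fun h ↦ ⟨y, by simp [h]⟩
  have hpair : #{x, y} = 2 := card_pair hxy
  obtain rfl | ht := Nat.eq_zero_or_pos t
  · have hthin := (isThinning_zero_empty F (G \ {x, y}) k).union_of_sdiff hsub hmeet
    refine ⟨_, hthin, ?_⟩
    rw [empty_union, hpair]
    omega
  · obtain ⟨W, hW, hcard⟩ := h
    refine ⟨W ∪ {x, y}, hW.union_of_sdiff hsub hmeet, ?_⟩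
    have hmax : max #G (2 * (k + 1)) = max #(G \ {x, y}) (2 * k) + 2 := by
      rw [← card_sdiff_add_card_eq_card hsub, hpair]
      omega
    have hunion : #(W ∪ {x, y}) = #W + 2 := by
      rw [card_union_of_disjoint (disjoint_of_subset_left hW.1 sdiff_disjoint), hpair]
    rw [hunion, hmax]
    exact succ_mul_add_two_le ht htk (le_max_right _ _) hcard

lemma exists_isThinning_of_vcDim_le_one (hF : F.vcDim ≤ 1) (G : Finset V) (htk : t ≤ k) :
    ∃ W, IsThinning F G k t W ∧ k * #W ≤ t * max #G (2 * k) := by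
  obtain rfl | ⟨e₀, he₀⟩ := F.eq_empty_or_nonempty
  · exact ⟨∅, ⟨empty_subset G, by simp⟩, by simp⟩
  induction t generalizing k G with
  | zero => exact ⟨∅, isThinning_zero_empty .., by simp⟩
  | succ t ih =>
    obtain ⟨k, rfl⟩ : ∃ l, k = l + 1 := ⟨k - 1, by omega⟩
    by_cases hpair : ∃ x ∈ e₀ ∩ G, ∃ y ∈ e₀ ∩ G, x ≠ y ∧ ∀ e ∈ F, x ∈ e ∨ y ∈ e
    · obtain ⟨x, hx, y, hy, hxy, hcover⟩ := hpair
      exact exists_isThinning_succ_of_pair (mem_of_mem_inter_right hx)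
        (mem_of_mem_inter_right hy) hxy hcover (by omega) (ih _ (by omega))
    · push Not at hpair
      have hinter : IsForest F (e₀ ∩ G) := isForest_of_vcDim_le_one hF hpair
      have hsdiff : IsForest F (G \ e₀) := isForest_of_vcDim_le_one hF fun x hx y hy _ ↦
        ⟨e₀, he₀, (mem_sdiff.1 hx).2, (mem_sdiff.1 hy).2⟩
      obtain ⟨W, hW, hcard⟩ := exists_isThinning_union_of_isForest
        (disjoint_sdiff.mono_left inter_subset_left) hinter hsdiff htk
      rw [inter_comm, union_comm, sdiff_union_inter] at hW hcard
      exact ⟨W, hW, hcard.trans (by gcongr; exact le_max_left _ _)⟩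

lemma exists_card_le_forall_le_card_inter_of_card_univ_le [Fintype V] (htk : t ≤ k)
    (hk : Fintype.card V ≤ k) (hcard : ∀ e ∈ F, k ≤ #e) :
    ∃ W : Finset V, #W ≤ t ∧ ∀ e ∈ F, t ≤ #(e ∩ W) := by
  obtain rfl | ⟨e₀, he₀⟩ := F.eq_empty_or_nonempty
  · exact ⟨∅, by simp⟩
  obtain ⟨W, -, hW⟩ := exists_subset_card_eq (htk.trans (hcard e₀ he₀))
  refine ⟨W, hW.le, fun e he ↦ ?_⟩
  have huniv : e = univ :=
    (card_eq_iff_eq_univ e).1 (le_antisymm (card_le_univ e) (hk.trans (hcard e he)))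
  rw [huniv, univ_inter, hW]

lemma exists_card_le_mul_forall_le_card_inter [Fintype V] (hF : F.vcDim ≤ 1) (htk : t ≤ k)
    {m : ℕ} (hm : 0 < m) (hV : Fintype.card V ≤ k * m) (hcard : ∀ e ∈ F, k ≤ #e) :
    ∃ W : Finset V, #W ≤ t * m ∧ ∀ e ∈ F, t ≤ #(e ∩ W) := by
  obtain rfl | hk := Nat.eq_zero_or_pos k
  · exact ⟨∅, by simp, fun e _ ↦ by omega⟩
  obtain rfl | hm2 : m = 1 ∨ 2 ≤ m := by omega
  · simpa only [mul_one] using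
      exists_card_le_forall_le_card_inter_of_card_univ_le htk (by simpa using hV) hcard
  obtain ⟨W, ⟨-, hW⟩, hWcard⟩ := exists_isThinning_of_vcDim_le_one hF univ htk
  refine ⟨W, Nat.le_of_mul_le_mul_left ?_ hk, fun e he ↦ ?_⟩
  · calc k * #W ≤ t * max (Fintype.card V) (2 * k) := hWcard
      _ ≤ t * (k * m) := by gcongr; exact max_le hV (by rw [mul_comm]; gcongr)
      _ = k * (t * m) := mul_left_comm t k m
  · have hthin := hW e he
    rw [inter_univ, min_eq_right (hcard e he)] at hthin
    omega

lemma le_ceil_mul_mul_ceil_one_div {ε : ℝ} (hε : 0 < ε) (n : ℕ) : n ≤ ⌈ε * n⌉₊ * ⌈1 / ε⌉₊ := by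
  have : (n : ℝ) ≤ ⌈ε * n⌉₊ * ⌈1 / ε⌉₊ :=
    calc (n : ℝ) = ε * n * (1 / ε) := by field_simp
      _ ≤ ⌈ε * n⌉₊ * ⌈1 / ε⌉₊ := by gcongr <;> exact Nat.le_ceil _
  exact_mod_cast this

lemma le_ceil_mul_of_mul_ceil_one_div_le {ε : ℝ} (hε : 0 < ε) {n : ℕ} (h : t * ⌈1 / ε⌉₊ ≤ n) :
    t ≤ ⌈ε * n⌉₊ := by
  have : (t : ℝ) ≤ ⌈ε * n⌉₊ :=
    calc (t : ℝ) = ε * (t * (1 / ε)) := by field_simp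
      _ ≤ ε * (t * ⌈1 / ε⌉₊ : ℕ) := by push_cast; gcongr; exact Nat.le_ceil _
      _ ≤ ε * n := by gcongr
      _ ≤ ⌈ε * n⌉₊ := Nat.le_ceil _
  exact_mod_cast this

end

theorem eps_t_net_of_vc_dim_one_general {V : Type*} [Fintype V] [DecidableEq V]
    (E : Finset (Finset V)) (t : ℕ) (ε : ℝ) (hε : 0 < ε)
    (ht : t ≤ ⌈ε * Fintype.card V⌉₊) (hvc : E.vcDim ≤ 1) :
    ∃ S : Finset (Finset V), IsEpsTNet E ε t S ∧ S.card ≤ t * ⌈1 / ε⌉₊ + 1 := by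
  let F := E.filter fun e ↦ ε * Fintype.card V ≤ e.card
  have hF : F.vcDim ≤ 1 := (Finset.vcDim_mono (Finset.filter_subset _ _)).trans hvc
  have hcard : ∀ e ∈ F, ⌈ε * Fintype.card V⌉₊ ≤ e.card := fun e he ↦
    Nat.ceil_le.2 (Finset.mem_filter.1 he).2
  obtain ⟨W, hWcard, hW⟩ := exists_card_le_mul_forall_le_card_inter hF ht
    (Nat.ceil_pos.2 (one_div_pos.2 hε)) (le_ceil_mul_mul_ceil_one_div hε _) hcard
  obtain ⟨S, hScard, hSt, hS⟩ := exists_card_eq_subset_of_le_card_inter hW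
  refine ⟨S, ⟨hSt, fun e he hlarge ↦ hS e (Finset.mem_filter.2 ⟨he, hlarge⟩)⟩, ?_⟩
  calc S.card ≤ W.card + 1 := hScard.trans (card_image_inter_le_of_vcDim_le_one hF W)
    _ ≤ t * ⌈1 / ε⌉₊ + 1 := Nat.add_le_add_right hWcard 1

theorem eps_t_net_of_vc_dim_one {V : Type*} [Fintype V] [DecidableEq V]
    (E : Finset (Finset V)) (t : ℕ) (ht : 1 ≤ t) (ε : ℝ) (hε0 : 0 < ε) (hε1 : ε ≤ 1 / 2)
    (hn : t * ⌈1 / ε⌉₊ ≤ Fintype.card V) (hvc : IsVCDim E 1) :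
    ∃ S : Finset (Finset V), IsEpsTNet E ε t S ∧ S.card ≤ t * ⌈1 / ε⌉₊ + 1 :=
  eps_t_net_of_vc_dim_one_general E t ε hε0 (le_ceil_mul_of_mul_ceil_one_div_le hε0 hn)
    hvc.vcDim_eq.le
end

section
/- For every integer t ≥ 1 there is a constant c_t > 0 such that the following holds: every finite hypergraph H on n vertices with VC-dimension d ≥ 1 admits, for every ε ∈ (0,1) with n ≥ 2t/ε, an ε-t-net of size at most c_t·(d/ε^t)·log₂(2/ε). -/
/-!
An `ε`-`t`-net for `E` is an ordinary net for the hypergraph on the `t`-subsets of `V` whose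
hyperedges collect the `t`-subsets of a heavy `e ∈ E`. As `ε n ≥ 2 t`, each of these has density
at least `δ = (ε / 2) ^ t`. Among the `t`-subsets met by a sample, the trace of such a hyperedge is
determined by the trace of `e` on at most `2 m t` vertices, so the Sauer–Shelah lemma on `V` bounds
the number of traces by a polynomial of degree `d`. The `ε`-net theorem is proved by double
sampling: a pair of samples `x, y` of size `m` is weighted so that if every `x` misses some
hyperedge, the total weight is at least `(1 + δ) ^ m` on average, while exchanging `x i` and `y i`
independently shows that it is at most the number of traces.
-/

section

open Finset

section Trace

variable {V : Type*} [DecidableEq V]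

/-- The trace of the family `E` on `U`: the set of all intersections `e ∩ U` with `e ∈ E`. -/
def traceOn (E : Finset (Finset V)) (U : Finset V) : Finset (Finset V) :=
  E.image (· ∩ U)

variable {E : Finset (Finset V)} {U A : Finset V} {d : ℕ}

theorem vcDim_le_of_isVCDim (hE : IsVCDim E d) : E.vcDim ≤ d :=
  Finset.sup_le fun A hA => hE.2 A fun _ hB => mem_shatterer.1 hA hB

theorem subset_of_shatters_traceOn (hA : (traceOn E U).Shatters A) : A ⊆ U := by
  obtain ⟨_, hu, hAu⟩ := hA.exists_superset
  obtain ⟨e, -, rfl⟩ := mem_image.1 hu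
  exact hAu.trans inter_subset_right

theorem shatters_of_shatters_traceOn (hA : (traceOn E U).Shatters A) : E.Shatters A := by
  intro B hB
  obtain ⟨_, hu, rfl⟩ := hA hB
  obtain ⟨e, he, rfl⟩ := mem_image.1 hu
  refine ⟨e, he, ?_⟩
  rw [inter_comm e U, ← inter_assoc, inter_eq_left.2 (subset_of_shatters_traceOn hA)]

theorem card_traceOn_le_card_filter_powerset (hd : E.vcDim ≤ d) :
    #(traceOn E U) ≤ #{A ∈ U.powerset | #A ≤ d} := by
  refine (card_le_card_shatterer _).trans (card_le_card fun A hA => ?_)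
  rw [mem_shatterer] at hA
  exact mem_filter.2 ⟨mem_powerset.2 (subset_of_shatters_traceOn hA),
    (shatters_of_shatters_traceOn hA).card_le_vcDim.trans hd⟩

theorem card_traceOn_mul_pow_le (hd : E.vcDim ≤ d) {x : ℝ} (hx₀ : 0 ≤ x) (hx₁ : x ≤ 1) :
    #(traceOn E U) * x ^ d ≤ (1 + x) ^ #U :=
  calc #(traceOn E U) * x ^ d
      ≤ #{A ∈ U.powerset | #A ≤ d} * x ^ d := by
        gcongr ?_ * _
        exact_mod_cast card_traceOn_le_card_filter_powerset hd
    _ = ∑ A ∈ U.powerset with #A ≤ d, x ^ d := by rw [sum_const, nsmul_eq_mul]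
    _ ≤ ∑ A ∈ U.powerset with #A ≤ d, x ^ #A :=
        sum_le_sum fun A hA => pow_le_pow_of_le_one hx₀ hx₁ (mem_filter.1 hA).2
    _ ≤ ∑ A ∈ U.powerset, x ^ #A :=
        sum_le_sum_of_subset_of_nonneg (filter_subset _ _) fun _ _ _ => by positivity
    _ = (1 + x) ^ #U := by
        simpa only [one_pow, mul_one, add_comm x] using sum_pow_mul_eq_add_pow x 1 U

end Trace

section DoubleSampling

variable {W ι : Type*}

/-- Exchange the two coordinates of a double sample at the indices selected by `s`. -/
def swapPairs (s : ι → Bool) : (ι → W × W) ≃ (ι → W × W) :=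
  Equiv.piCongrRight fun i => if s i then Equiv.prodComm W W else Equiv.refl _

theorem swapPairs_apply (s : ι → Bool) (z : ι → W × W) (i : ι) :
    swapPairs s z i = if s i then (z i).swap else z i := by
  cases hs : s i <;> simp [swapPairs, hs]

variable [DecidableEq W]

/-- The weight of a pair of sample points with respect to a hyperedge `h`. If the first point
misses `h`, it is `1` plus the indicator of the second point; otherwise it is `0`. This makes the
average over the two orders of a pair at most `1`. -/
def missWeight (h : Finset W) (p : W × W) : ℕ :=
  if p.1 ∈ h then 0 else if p.2 ∈ h then 2 else 1

theorem missWeight_add_missWeight_swap_le (h : Finset W) (p : W × W) :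
    missWeight h p + missWeight h p.swap ≤ 2 := by
  simp only [missWeight, Prod.fst_swap, Prod.snd_swap]
  split_ifs <;> norm_num

theorem missWeight_of_fst_notMem {h : Finset W} {p : W × W} (hp : p.1 ∉ h) :
    missWeight h p = 1 + if p.2 ∈ h then 1 else 0 := by
  rw [missWeight, if_neg hp]
  split_ifs <;> rfl

variable [Fintype ι]

/-- The set of points occurring in a double sample `z`. -/
def samplePoints (z : ι → W × W) : Finset W :=
  univ.biUnion fun i => {(z i).1, (z i).2}

theorem card_samplePoints_le (z : ι → W × W) : #(samplePoints z) ≤ Fintype.card ι * 2 :=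
  card_biUnion_le_card_mul _ _ 2 fun _ _ => card_le_two

theorem fst_mem_samplePoints (z : ι → W × W) (i : ι) : (z i).1 ∈ samplePoints z :=
  mem_biUnion.2 ⟨i, mem_univ i, mem_insert_self _ _⟩

theorem snd_mem_samplePoints (z : ι → W × W) (i : ι) : (z i).2 ∈ samplePoints z :=
  mem_biUnion.2 ⟨i, mem_univ i, mem_insert_of_mem (mem_singleton_self _)⟩

/-- The product weight of a double sample with respect to a hyperedge `h`. -/
def sampleWeight (h : Finset W) (z : ι → W × W) : ℕ :=
  ∏ i, missWeight h (z i)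

theorem sampleWeight_inter_samplePoints (h : Finset W) (z : ι → W × W) :
    sampleWeight (h ∩ samplePoints z) z = sampleWeight h z := by
  simp only [sampleWeight, missWeight, mem_inter, fst_mem_samplePoints, snd_mem_samplePoints,
    and_true]

theorem samplePoints_swapPairs (s : ι → Bool) (z : ι → W × W) :
    samplePoints (swapPairs s z) = samplePoints z := by
  refine biUnion_congr rfl fun i _ => ?_
  rw [swapPairs_apply]
  split_ifs
  · exact pair_comm _ _
  · rfl

variable [DecidableEq ι]

theorem sum_sampleWeight_swapPairs_le (h : Finset W) (z : ι → W × W) :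
    ∑ s, sampleWeight h (swapPairs s z) ≤ 2 ^ Fintype.card ι :=
  calc ∑ s, sampleWeight h (swapPairs s z)
      = ∏ i, ∑ b : Bool, missWeight h (if b then (z i).swap else z i) := by
        simp only [sampleWeight, swapPairs_apply, Fintype.prod_sum]
    _ ≤ ∏ _i : ι, 2 := by
        refine prod_le_prod' fun i _ => ?_
        rw [Fintype.sum_bool, add_comm]
        exact missWeight_add_missWeight_swap_le h (z i)
    _ = 2 ^ Fintype.card ι := by rw [prod_const, card_univ]

variable [Fintype W]

theorem sum_sum_sampleWeight_le_sum_card_traceOn (F : Finset (Finset W)) :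
    ∑ z : ι → W × W, ∑ h ∈ traceOn F (samplePoints z), sampleWeight h z ≤
      ∑ z : ι → W × W, #(traceOn F (samplePoints z)) := by
  refine Nat.le_of_mul_le_mul_left (c := 2 ^ Fintype.card ι) ?_ (by positivity)
  calc 2 ^ Fintype.card ι *
        ∑ z : ι → W × W, ∑ h ∈ traceOn F (samplePoints z), sampleWeight h z
      = ∑ _s : ι → Bool,
          ∑ z : ι → W × W, ∑ h ∈ traceOn F (samplePoints z), sampleWeight h z := by
        rw [sum_const, card_univ, Fintype.card_fun, Fintype.card_bool, smul_eq_mul]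
    _ = ∑ s : ι → Bool, ∑ z : ι → W × W,
          ∑ h ∈ traceOn F (samplePoints z), sampleWeight h (swapPairs s z) := by
        refine sum_congr rfl fun s _ => ?_
        rw [← Equiv.sum_comp (swapPairs s)]
        simp only [samplePoints_swapPairs]
    _ = ∑ z : ι → W × W, ∑ h ∈ traceOn F (samplePoints z),
          ∑ s : ι → Bool, sampleWeight h (swapPairs s z) := by
        rw [sum_comm]
        exact sum_congr rfl fun z _ => sum_comm
    _ ≤ ∑ z : ι → W × W, ∑ _h ∈ traceOn F (samplePoints z), 2 ^ Fintype.card ι := by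
        gcongr
        exact sum_sampleWeight_swapPairs_le _ _
    _ = 2 ^ Fintype.card ι * ∑ z : ι → W × W, #(traceOn F (samplePoints z)) := by
        simp only [sum_const, smul_eq_mul, ← sum_mul, mul_comm]

theorem sum_sampleWeight_of_forall_notMem {f : Finset W} {x : ι → W} (hx : ∀ i, x i ∉ f) :
    ∑ y : ι → W, sampleWeight f (fun i => (x i, y i)) =
      (Fintype.card W + #f) ^ Fintype.card ι :=
  calc ∑ y : ι → W, sampleWeight f (fun i => (x i, y i))
      = ∏ _i : ι, ∑ w : W, (1 + if w ∈ f then 1 else 0) := by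
        simp only [sampleWeight, Fintype.prod_sum,
          fun (y : ι → W) i => missWeight_of_fst_notMem (p := (x i, y i)) (hx i)]
    _ = (Fintype.card W + #f) ^ Fintype.card ι := by
        simp [sum_add_distrib]

variable {F : Finset (Finset W)}

theorem card_pow_mul_pow_le_sum_card_traceOn {k : ℕ} (hk : ∀ f ∈ F, k ≤ #f)
    (hF : ∀ x : ι → W, ∃ f ∈ F, ∀ i, x i ∉ f) :
    Fintype.card W ^ Fintype.card ι * (Fintype.card W + k) ^ Fintype.card ι ≤
      ∑ z : ι → W × W, #(traceOn F (samplePoints z)) := by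
  choose f hfF hf using hF
  calc Fintype.card W ^ Fintype.card ι * (Fintype.card W + k) ^ Fintype.card ι
      = ∑ _x : ι → W, (Fintype.card W + k) ^ Fintype.card ι := by
        rw [sum_const, card_univ, Fintype.card_fun, smul_eq_mul]
    _ ≤ ∑ x : ι → W, (Fintype.card W + #(f x)) ^ Fintype.card ι := by
        gcongr with x
        exact hk _ (hfF x)
    _ = ∑ x : ι → W, ∑ y : ι → W, sampleWeight (f x) (fun i => (x i, y i)) :=
        sum_congr rfl fun x _ => (sum_sampleWeight_of_forall_notMem (hf x)).symm
    _ ≤ ∑ x : ι → W, ∑ y : ι → W,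
          ∑ h ∈ traceOn F (samplePoints fun i => (x i, y i)),
            sampleWeight h (fun i => (x i, y i)) := by
        gcongr with x _ y _
        rw [← sampleWeight_inter_samplePoints]
        exact single_le_sum (f := fun h => sampleWeight h fun i => (x i, y i))
          (fun _ _ => Nat.zero_le _) (mem_image_of_mem _ (hfF x))
    _ = ∑ z : ι → W × W, ∑ h ∈ traceOn F (samplePoints z), sampleWeight h z := by
        rw [← Equiv.sum_comp (Equiv.arrowProdEquivProdArrow ι (fun _ => W) (fun _ => W)).symm,
          Fintype.sum_prod_type]
        rfl
    _ ≤ ∑ z : ι → W × W, #(traceOn F (samplePoints z)) :=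
        sum_sum_sampleWeight_le_sum_card_traceOn F

omit [DecidableEq ι] in
theorem exists_forall_exists_mem_of_card_traceOn_lt [Nonempty W] {k : ℕ} (hk : ∀ f ∈ F, k ≤ #f)
    (hF : ∀ z : ι → W × W, Fintype.card W ^ Fintype.card ι * #(traceOn F (samplePoints z)) <
      (Fintype.card W + k) ^ Fintype.card ι) :
    ∃ x : ι → W, ∀ f ∈ F, ∃ i, x i ∈ f := by
  classical
  by_contra! hmiss
  refine lt_irrefl (∑ _z : ι → W × W, (Fintype.card W + k) ^ Fintype.card ι) ?_
  calc ∑ _z : ι → W × W, (Fintype.card W + k) ^ Fintype.card ι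
      = Fintype.card W ^ Fintype.card ι *
          (Fintype.card W ^ Fintype.card ι * (Fintype.card W + k) ^ Fintype.card ι) := by
        rw [sum_const, card_univ, Fintype.card_fun, Fintype.card_prod, smul_eq_mul, mul_pow,
          mul_assoc]
    _ ≤ Fintype.card W ^ Fintype.card ι * ∑ z : ι → W × W, #(traceOn F (samplePoints z)) :=
        Nat.mul_le_mul_left _ (card_pow_mul_pow_le_sum_card_traceOn hk hmiss)
    _ = ∑ z : ι → W × W, Fintype.card W ^ Fintype.card ι * #(traceOn F (samplePoints z)) :=
        mul_sum _ _ _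
    _ < ∑ _z : ι → W × W, (Fintype.card W + k) ^ Fintype.card ι :=
        sum_lt_sum_of_nonempty univ_nonempty fun z _ => hF z

omit [DecidableEq ι] in
theorem exists_forall_exists_mem_of_card_traceOn_lt_pow [Nonempty W] {δ : ℝ} (hδ : 0 ≤ δ)
    (hF : ∀ f ∈ F, δ * Fintype.card W ≤ #f)
    (htrace : ∀ z : ι → W × W, (#(traceOn F (samplePoints z)) : ℝ) < (1 + δ) ^ Fintype.card ι) :
    ∃ x : ι → W, ∀ f ∈ F, ∃ i, x i ∈ f := by
  refine exists_forall_exists_mem_of_card_traceOn_lt (k := ⌈δ * Fintype.card W⌉₊)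
    (fun f hf => Nat.ceil_le.2 (hF f hf)) fun z => ?_
  rw [← Nat.cast_lt (α := ℝ)]
  push_cast
  calc (Fintype.card W : ℝ) ^ Fintype.card ι * #(traceOn F (samplePoints z))
      < Fintype.card W ^ Fintype.card ι * (1 + δ) ^ Fintype.card ι := by
        gcongr
        exact htrace z
    _ = (Fintype.card W + δ * Fintype.card W) ^ Fintype.card ι := by
        rw [← mul_pow, mul_one_add, mul_comm δ]
    _ ≤ (Fintype.card W + ⌈δ * Fintype.card W⌉₊) ^ Fintype.card ι := by
        gcongr
        exact Nat.le_ceil _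

end DoubleSampling

section Subsets

variable {V : Type*}

/-- The `t`-subsets of `e`, as a set of points of the type of all `t`-subsets of `V`. -/
def tSubsets (t : ℕ) (e : Finset V) : Finset {s : Finset V // #s = t} :=
  (e.powersetCard t).subtype (#· = t)

variable {t : ℕ}

theorem mem_tSubsets {e : Finset V} {s : {s : Finset V // #s = t}} :
    s ∈ tSubsets t e ↔ s.1 ⊆ e := by
  rw [tSubsets, mem_subtype, mem_powersetCard, and_iff_left s.2]

theorem card_tSubsets (e : Finset V) : #(tSubsets t e) = (#e).choose t := by
  rw [tSubsets, card_subtype, filter_true_of_mem fun s hs => (mem_powersetCard.1 hs).2,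
    card_powersetCard]

variable [DecidableEq V]

theorem tSubsets_inter_biUnion (e : Finset V) (Z : Finset {s : Finset V // #s = t}) :
    tSubsets t (e ∩ Z.biUnion Subtype.val) ∩ Z = tSubsets t e ∩ Z := by
  ext s
  simp only [mem_inter, mem_tSubsets, subset_inter_iff]
  exact ⟨fun h => ⟨h.1.1, h.2⟩, fun h => ⟨⟨h.1, subset_biUnion_of_mem Subtype.val h.2⟩, h.2⟩⟩

theorem card_traceOn_image_tSubsets_le (E : Finset (Finset V))
    (Z : Finset {s : Finset V // #s = t}) :
    #(traceOn (E.image (tSubsets t)) Z) ≤ #(traceOn E (Z.biUnion Subtype.val)) := by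
  have htrace : traceOn (E.image (tSubsets t)) Z =
      (traceOn E (Z.biUnion Subtype.val)).image (tSubsets t · ∩ Z) := by
    simp only [traceOn, image_image, Function.comp_def, tSubsets_inter_biUnion]
  rw [htrace]
  exact card_image_le

theorem card_traceOn_image_tSubsets_mul_pow_le {ι : Type*} [Fintype ι] {E : Finset (Finset V)}
    {d : ℕ} (hd : E.vcDim ≤ d) {x : ℝ} (hx₀ : 0 ≤ x) (hx₁ : x ≤ 1)
    (z : ι → {s : Finset V // #s = t} × {s : Finset V // #s = t}) :
    #(traceOn (E.image (tSubsets t)) (samplePoints z)) * x ^ d ≤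
      (1 + x) ^ (Fintype.card ι * 2 * t) := by
  set U := (samplePoints z).biUnion Subtype.val
  have hU : #U ≤ Fintype.card ι * 2 * t :=
    (card_biUnion_le_card_mul _ _ t fun s _ => s.2.le).trans
      (Nat.mul_le_mul_right t (card_samplePoints_le z))
  calc #(traceOn (E.image (tSubsets t)) (samplePoints z)) * x ^ d
      ≤ #(traceOn E U) * x ^ d := by
        gcongr
        exact card_traceOn_image_tSubsets_le E _
    _ ≤ (1 + x) ^ #U := card_traceOn_mul_pow_le hd hx₀ hx₁
    _ ≤ (1 + x) ^ (Fintype.card ι * 2 * t) := pow_le_pow_right₀ (by linarith) hU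

end Subsets

theorem half_pow_mul_choose_le_choose {t n k : ℕ} {ε : ℝ} (hε : 0 ≤ ε) (hk : ε * n ≤ k)
    (hn : 2 * t ≤ ε * n) : (ε / 2) ^ t * n.choose t ≤ k.choose t := by
  have htk : t ≤ k + 1 := by
    have : (t : ℝ) ≤ (k + 1 : ℕ) := by push_cast; linarith
    exact_mod_cast this
  calc (ε / 2) ^ t * n.choose t
      ≤ (ε / 2) ^ t * (n ^ t / t.factorial) := by
        gcongr
        exact Nat.choose_le_pow_div t n
    _ = (ε / 2 * n) ^ t / t.factorial := by rw [mul_pow, mul_div_assoc]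
    _ ≤ ((k + 1 - t : ℕ) : ℝ) ^ t / t.factorial := by
        gcongr
        push_cast [htk]
        linarith
    _ ≤ k.choose t := Nat.pow_le_choose t k

section Net

variable {V : Type*} [Fintype V] [DecidableEq V]

/-- The hypergraph on the `t`-subsets of `V` with one hyperedge for each `e ∈ E` of size at least
`ε |V|`, namely the set of all `t`-subsets of `e`. -/
noncomputable def heavyTSubsets (E : Finset (Finset V)) (ε : ℝ) (t : ℕ) :
    Finset (Finset {s : Finset V // #s = t}) :=
  ({e ∈ E | ε * Fintype.card V ≤ #e} : Finset (Finset V)).image (tSubsets t)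

variable {E : Finset (Finset V)} {d t : ℕ} {ε : ℝ}

theorem isEpsTNet_image_of_forall_exists_mem {ι : Type*} [Fintype ι]
    {y : ι → {s : Finset V // #s = t}} (hy : ∀ f ∈ heavyTSubsets E ε t, ∃ i, y i ∈ f) :
    IsEpsTNet E ε t (univ.image fun i => (y i).1) := by
  refine ⟨fun s hs => ?_, fun e he hcard => ?_⟩
  · obtain ⟨i, -, rfl⟩ := mem_image.1 hs
    exact (y i).2
  · obtain ⟨i, hi⟩ := hy _ (mem_image_of_mem _ (mem_filter.2 ⟨he, hcard⟩))
    exact ⟨(y i).1, mem_image_of_mem _ (mem_univ i), mem_tSubsets.1 hi⟩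

theorem half_pow_mul_card_le_card_of_mem_heavyTSubsets (hε : 0 ≤ ε)
    (hn : 2 * t ≤ ε * Fintype.card V) {f : Finset {s : Finset V // #s = t}}
    (hf : f ∈ heavyTSubsets E ε t) :
    (ε / 2) ^ t * Fintype.card {s : Finset V // #s = t} ≤ #f := by
  obtain ⟨e, he, rfl⟩ := mem_image.1 hf
  rw [card_tSubsets, Fintype.card_finset_len]
  exact half_pow_mul_choose_le_choose hε (mem_filter.1 he).2 hn

theorem exists_isEpsTNet_card_le_of_pow_lt (hd : E.vcDim ≤ d) (hε₀ : 0 ≤ ε) (hε₁ : ε ≤ 1)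
    (hn : 2 * t ≤ ε * Fintype.card V) {m : ℕ} {x : ℝ} (hx₀ : 0 < x) (hx₁ : x ≤ 1)
    (hm : (1 + x) ^ (m * 2 * t) < (1 + (ε / 2) ^ t) ^ m * x ^ d) :
    ∃ S : Finset (Finset V), IsEpsTNet E ε t S ∧ #S ≤ m := by
  have : Nonempty {s : Finset V // #s = t} := by
    have htn : (t : ℝ) ≤ Fintype.card V := by
      nlinarith [(Fintype.card V).cast_nonneg (α := ℝ), t.cast_nonneg (α := ℝ)]
    rw [← Fintype.card_pos_iff, Fintype.card_finset_len]
    exact Nat.choose_pos (mod_cast htn)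
  obtain ⟨y, hy⟩ := exists_forall_exists_mem_of_card_traceOn_lt_pow (F := heavyTSubsets E ε t)
    (ι := Fin m) (by positivity)
    (fun f => half_pow_mul_card_le_card_of_mem_heavyTSubsets hε₀ hn) fun z => by
      rw [Fintype.card_fin]
      refine lt_of_mul_lt_mul_right (lt_of_le_of_lt ?_ hm) (by positivity : 0 ≤ x ^ d)
      simpa only [heavyTSubsets, Fintype.card_fin] using card_traceOn_image_tSubsets_mul_pow_le
        ((vcDim_mono (filter_subset _ E)).trans hd) hx₀.le hx₁ z
  exact ⟨_, isEpsTNet_image_of_forall_exists_mem hy,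
    card_image_le.trans_eq (by rw [card_univ, Fintype.card_fin])⟩

end Net

section SampleSize

variable {ε : ℝ} {d : ℕ}

theorem half_le_log_one_add {x : ℝ} (hx₀ : 0 ≤ x) (hx₁ : x ≤ 1) : x / 2 ≤ Real.log (1 + x) := by
  refine le_trans ?_ (Real.le_log_one_add_of_nonneg hx₀)
  rw [div_le_div_iff₀ two_pos (by positivity)]
  nlinarith

theorem neg_mul_log_le_log_pow_div (hε₀ : 0 < ε) (hε₁ : ε ≤ 1) (t : ℕ) :
    -((2 * t + 3) * Real.log (2 / ε)) ≤ Real.log ((ε / 2) ^ t / 2 ^ (t + 3)) := by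
  have hlog : Real.log 2 ≤ Real.log (2 / ε) :=
    Real.log_le_log two_pos (le_div_self zero_le_two hε₀ hε₁)
  rw [Real.log_div (x := (ε / 2) ^ t) (by positivity) (by positivity), Real.log_pow, Real.log_pow,
    ← inv_div 2 ε, Real.log_inv]
  push_cast
  nlinarith [t.cast_nonneg (α := ℝ)]

/- With `δ = (ε / 2) ^ t`, the choice `x = δ / 2 ^ (t + 3)` makes `2 m t x ≤ δ m / 4` and keeps
`log (1 / x)` within a factor `2 t + 3` of `log (2 / ε)`. -/
theorem one_add_pow_lt_of_mul_log_lt {t m : ℕ} (hε₀ : 0 < ε) (hε₁ : ε ≤ 1)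
    (hm : 4 * (d * ((2 * t + 3) * Real.log (2 / ε))) < (ε / 2) ^ t * m) :
    (1 + (ε / 2) ^ t / 2 ^ (t + 3)) ^ (m * 2 * t) <
      (1 + (ε / 2) ^ t) ^ m * ((ε / 2) ^ t / 2 ^ (t + 3)) ^ d := by
  set δ := (ε / 2) ^ t
  set x := δ / 2 ^ (t + 3)
  have hδ₀ : 0 < δ := by positivity
  have hδ₁ : δ ≤ 1 := pow_le_one₀ (by positivity) (by linarith)
  have hx₀ : 0 < x := by positivity
  have hlog_one_add_x : t * Real.log (1 + x) ≤ δ / 8 :=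
    calc t * Real.log (1 + x)
        ≤ 2 ^ t * x := by
          gcongr
          · exact Real.log_nonneg (by linarith)
          · exact_mod_cast t.lt_two_pow_self.le
          · linarith [Real.log_le_sub_one_of_pos (show 0 < 1 + x by positivity)]
      _ = δ / 8 := by
          simp only [x, pow_add]
          field_simp
          norm_num
  have hlog_one_add_δ : δ / 2 ≤ Real.log (1 + δ) := half_le_log_one_add hδ₀.le hδ₁
  have hlog_x : -(d * ((2 * t + 3) * Real.log (2 / ε))) ≤ d * Real.log x := by
    rw [← mul_neg]
    gcongr
    exact neg_mul_log_le_log_pow_div hε₀ hε₁ t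
  rw [← Real.log_lt_log_iff (by positivity) (by positivity),
    Real.log_mul (by positivity) (by positivity), Real.log_pow, Real.log_pow, Real.log_pow]
  push_cast
  calc (m : ℝ) * 2 * t * Real.log (1 + x)
      = 2 * m * (t * Real.log (1 + x)) := by ring
    _ ≤ 2 * m * (δ / 8) := by gcongr
    _ < m * (δ / 2) - d * ((2 * t + 3) * Real.log (2 / ε)) := by linarith
    _ ≤ m * Real.log (1 + δ) + d * Real.log x := by
        rw [sub_eq_add_neg]
        gcongr

theorem exists_nat_four_mul_lt_le_five_mul {Q : ℝ} (hQ : 1 ≤ Q) :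
    ∃ m : ℕ, 4 * Q < m ∧ (m : ℝ) ≤ 5 * Q := by
  refine ⟨⌊4 * Q⌋₊ + 1, by exact_mod_cast Nat.lt_floor_add_one _, ?_⟩
  push_cast
  linarith [Nat.floor_le (show 0 ≤ 4 * Q by linarith)]

theorem exists_sample_size (hε₀ : 0 < ε) (hε₁ : ε ≤ 1) (hd : 1 ≤ d) (t : ℕ) :
    ∃ m : ℕ, 4 * (d * ((2 * t + 3) * Real.log (2 / ε))) < (ε / 2) ^ t * m ∧
      m ≤ 5 * 2 ^ t * (2 * t + 3) * (d / ε ^ t) * Real.logb 2 (2 / ε) := by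
  have hlogb : 1 ≤ Real.logb 2 (2 / ε) := by
    rw [Real.le_logb_iff_rpow_le one_lt_two (by positivity), Real.rpow_one]
    exact le_div_self zero_le_two hε₀ hε₁
  have hlog : Real.log (2 / ε) ≤ Real.logb 2 (2 / ε) :=
    le_div_self (Real.log_nonneg (by rw [le_div_iff₀ hε₀]; linarith)) (Real.log_pos one_lt_two)
      (by linarith [Real.log_two_lt_d9])
  have hε_pow : (ε / 2) ^ t ≤ 1 := pow_le_one₀ (by positivity) (by linarith)
  set Q := d * ((2 * t + 3) * Real.logb 2 (2 / ε)) / (ε / 2) ^ t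
  have hQ : 1 ≤ Q := by
    rw [one_le_div (by positivity)]
    refine hε_pow.trans (one_le_mul_of_one_le_of_one_le (mod_cast hd) ?_)
    exact one_le_mul_of_one_le_of_one_le (by linarith [t.cast_nonneg (α := ℝ)]) hlogb
  obtain ⟨m, hm_lower, hm_upper⟩ := exists_nat_four_mul_lt_le_five_mul hQ
  refine ⟨m, ?_, hm_upper.trans_eq ?_⟩
  · calc 4 * (d * ((2 * t + 3) * Real.log (2 / ε)))
        ≤ 4 * (d * ((2 * t + 3) * Real.logb 2 (2 / ε))) := by gcongr
      _ = (ε / 2) ^ t * (4 * Q) := by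
          simp only [Q]
          field_simp
      _ < (ε / 2) ^ t * m := by gcongr
  · simp only [Q, div_pow]
    field_simp

end SampleSize

theorem eps_t_net_upper_bound_general {V : Type*} [Fintype V] [DecidableEq V]
    {E : Finset (Finset V)} {d : ℕ} (hE : E.vcDim ≤ d) (hd : 1 ≤ d) (t : ℕ) {ε : ℝ} (hε₀ : 0 < ε)
    (hε₁ : ε ≤ 1) (hn : 2 * (t : ℝ) / ε ≤ Fintype.card V) :
    ∃ S : Finset (Finset V), IsEpsTNet E ε t S ∧
      (#S : ℝ) ≤ 5 * 2 ^ t * (2 * t + 3) * (d / ε ^ t) * Real.logb 2 (2 / ε) := by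
  obtain ⟨m, hm_lower, hm_upper⟩ := exists_sample_size hε₀ hε₁ hd t
  obtain ⟨S, hS, hSm⟩ := exists_isEpsTNet_card_le_of_pow_lt hE hε₀.le hε₁
    ((div_le_iff₀' hε₀).1 hn) (by positivity)
    (div_le_one_of_le₀ ((pow_le_one₀ (by positivity) (by linarith)).trans
      (one_le_pow₀ one_le_two)) (by positivity))
    (one_add_pow_lt_of_mul_log_lt hε₀ hε₁ hm_lower)
  exact ⟨S, hS, (Nat.cast_le.2 hSm).trans hm_upper⟩

end

theorem eps_t_net_upper_bound (t : ℕ) (ht : 1 ≤ t) :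
    ∃ c : ℝ, 0 < c ∧
      ∀ (V : Type) (_ : Fintype V) (_ : DecidableEq V) (E : Finset (Finset V)) (d : ℕ),
        IsVCDim E d → 1 ≤ d →
        ∀ ε : ℝ, ε ∈ Set.Ioo (0 : ℝ) 1 → 2 * (t : ℝ) / ε ≤ (Fintype.card V : ℝ) →
          ∃ S : Finset (Finset V), IsEpsTNet E ε t S ∧
            (S.card : ℝ) ≤ c * ((d : ℝ) / ε ^ t) * Real.logb 2 (2 / ε) := by
  refine ⟨5 * 2 ^ t * (2 * t + 3), by positivity, fun V _ _ E d hE hd ε hε hn => ?_⟩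
  exact eps_t_net_upper_bound_general (vcDim_le_of_isVCDim hE) hd t hε.1 hε.2.le hn
end
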